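/- Let π ∈ S_N and 1 ≤ i ≤ N−1 with ℓ(s_i π) > ℓ(π). Then ⟨s_iπ| B_{N−1}(σ_1) ⋯ B_i(σ_{N−i}) B_{i−1}(σ_{N−i+1}) = ∂^β_{N−i} ( ⟨π| B_{N−1}(σ_1) ⋯ B_i(σ_{N−i}) B_{i−1}(σ_{N−i+1}) ), where both sides are covectors whose components are rational functions of σ_1,…,σ_{N−i+1}, the product runs over consecutive descending indices N−1, N−2, …, i−1, and ∂^β_{N−i} is the β-divided difference operator in the variables σ_{N−i}, σ_{N−i+1} applied componentwise. -/

import Mathlib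

noncomputable section
open scoped BigOperators

variable {F : Type*}

/-- `x ⊖ y := (x - y)/(1 + β·y)`. -/
def om [Field F] (β x y : F) : F := (x - y) / (1 + β * y)

/-- `⊖ t := -t/(1 + β·t)`. -/
def negOm [Field F] (β t : F) : F := (-t) / (1 + β * t)

/-- The R-matrix `R^{(n)}(x,y)` on `V ⊗ V`, `V = F^n`, with entries
`R_{ij,kl} = (1 + [k<l]·β(x⊖y)) δ_{il} δ_{jk} + [k>l]·(x⊖y) δ_{ik} δ_{jl}`;
the row index is the pair `(i,j)`, the column index is the pair `(k,l)`. -/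
def Rmat [Field F] (n : ℕ) (β x y : F) :
    Matrix (Fin n × Fin n) (Fin n × Fin n) F := Matrix.of fun p q =>
  (if p.1 = q.2 ∧ p.2 = q.1 then (if q.1 < q.2 then 1 + β * om β x y else 1) else 0) +
  (if p.1 = q.1 ∧ p.2 = q.2 ∧ q.2 < q.1 then om β x y else 0)

/-- `R_{a i}(u, τ)` : the R-matrix acting on the auxiliary space (first factor)
and the `i`-th site of `H = (F^n)^{⊗N}`, identity elsewhere. -/
def Rsite [Field F] (n N : ℕ) (β u τ : F) (i : Fin N) :
    Matrix (Fin n × (Fin N → Fin n)) (Fin n × (Fin N → Fin n)) F := Matrix.of fun p q =>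
  Rmat n β u τ (p.1, p.2 i) (q.1, q.2 i) *
    (if ∀ j, j ≠ i → p.2 j = q.2 j then 1 else 0)

/-- The monodromy matrix `T_a(u) = R_{aN}(u,t_N) ⋯ R_{a1}(u,t_1)` on `V_a ⊗ H`. -/
def Tmono [Field F] (n N : ℕ) (β u : F) (t : Fin N → F) :
    Matrix (Fin n × (Fin N → Fin n)) (Fin n × (Fin N → Fin n)) F :=
  ((List.ofFn fun i : Fin N => Rsite n N β u (t i) i).reverse).prod

/-- The block `T_a(u)_{r c}` (with respect to the auxiliary space) as an operator on `H`. -/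
def blockOp [Field F] (n N : ℕ) (β u : F) (t : Fin N → F) (r c : Fin n) :
    Matrix (Fin N → Fin n) (Fin N → Fin n) F :=
  Matrix.of fun s s' => Tmono n N β u t (r, s) (c, s')

/-- The natural basis vector `|n_1,…,n_N⟩` of `H` (also used as a dual basis covector). -/
def ket [Field F] (n N : ℕ) (g : Fin N → Fin n) : (Fin N → Fin n) → F :=
  fun s => if s = g then 1 else 0

/-- The Coxeter length of a permutation: its number of inversions. -/
def permLength {N : ℕ} (w : Equiv.Perm (Fin N)) : ℕ :=
  (Finset.univ.filter fun p : Fin N × Fin N => p.1 < p.2 ∧ w p.2 < w p.1).card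

/-- The longest permutation `ω_N : i ↦ N - 1 - i`. -/
def omegaPerm (N : ℕ) : Equiv.Perm (Fin N) :=
  ⟨Fin.rev, Fin.rev, fun i => Fin.rev_rev i, fun i => Fin.rev_rev i⟩

/-- The product `B_{N-1}(σ_1) B_{N-2}(σ_2) ⋯` of `c` consecutive descending
B-operators (`n = N = M+2`). -/
def topString [Field F] (M : ℕ) (β : F) (t : Fin (M + 2) → F) (σ : Fin (M + 2) → F)
    (c : ℕ) (hc : c ≤ M + 1) :
    Matrix (Fin (M + 2) → Fin (M + 2)) (Fin (M + 2) → Fin (M + 2)) F :=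
  (List.ofFn fun a : Fin c =>
      blockOp (M + 2) (M + 2) β (σ ⟨a, by have := a.isLt; omega⟩) t 0
        ⟨M + 1 - (a : ℕ), by omega⟩).prod

/-- The full descending product
`B_{N-1}(σ_1) ⋯ B_{i+1}(σ_{N-i-1}) B_i(σ_{N-i}) B_{i-1}(σ_{N-i+1})`
as a function of the parameters `σ`. -/
def fullDesc [Field F] (M : ℕ) (β : F) (t : Fin (M + 2) → F) (ii : Fin (M + 1))
    (σ : Fin (M + 2) → F) :
    Matrix (Fin (M + 2) → Fin (M + 2)) (Fin (M + 2) → Fin (M + 2)) F :=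
  topString M β t σ (M - (ii : ℕ)) (by omega) *
    blockOp (M + 2) (M + 2) β (σ ⟨M - (ii : ℕ), by omega⟩) t 0 ii.succ *
    blockOp (M + 2) (M + 2) β (σ ⟨M + 1 - (ii : ℕ), by omega⟩) t 0 ii.castSucc


/-! ### Rows of the site operators -/

/-- Weight of the exchange of the auxiliary colour `a` with the site colour `b`. -/
def fW [Field F] {n : ℕ} (β o : F) (a b : Fin n) : F := if b < a then 1 + β * o else 1

/-- Weight of passing: auxiliary colour `a`, site colour `b`. -/
def gW [Field F] {n : ℕ} (o : F) (a b : Fin n) : F := if b < a then o else 0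

/-- Basis covector. -/
abbrev bv [Field F] {ι : Type*} [DecidableEq ι] (p : ι) : ι → F := Pi.single p 1

lemma Rsite_row [Field F] (n N : ℕ) (β u τ : F) (i : Fin N) (a : Fin n) (s : Fin N → Fin n) :
    Rsite n N β u τ i (a, s) = fW β (om β u τ) a (s i) • bv (s i, Function.update s i a)
      + gW (om β u τ) a (s i) • bv (F := F) (a, s) := by
  funext ⟨c, s'⟩
  simp only [Rsite, Rmat, Matrix.of_apply, Pi.add_apply, Pi.smul_apply, bv, Pi.single_apply,
    smul_eq_mul, Prod.mk.injEq, fW, gW]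
  have h1 : s' = Function.update s i a ↔ s' i = a ∧ ∀ j, j ≠ i → s j = s' j := by
    constructor
    · rintro rfl
      refine ⟨by simp, fun j hj => by simp [hj]⟩
    · rintro ⟨h, h'⟩
      funext j
      by_cases hj : j = i
      · subst hj; simpa using h
      · simp [hj, h' j hj]
  have h2 : s' = s ↔ s' i = s i ∧ ∀ j, j ≠ i → s j = s' j := by
    constructor
    · rintro rfl; simp
    · rintro ⟨h, h'⟩
      funext j
      by_cases hj : j = i
      · subst hj; exact h
      · exact (h' j hj).symm
  by_cases hQ : ∀ j, j ≠ i → s j = s' j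
  · have h1' := h1.trans (and_iff_left hQ)
    have h2' := h2.trans (and_iff_left hQ)
    simp only [if_pos hQ, h1', h2', mul_one]
    by_cases h3 : c = s i <;> by_cases h4 : s' i = a <;> by_cases h5 : c = a <;>
      by_cases h6 : s' i = s i <;> grind
  · have h1' : ¬ s' = Function.update s i a := fun h => hQ (h1.1 h).2
    have h2' : ¬ s' = s := fun h => hQ (h2.1 h).2
    simp only [if_neg hQ, h1', h2', and_false, if_false, mul_zero, add_zero]

lemma bv_Rsite [Field F] (n N : ℕ) (β u τ : F) (i : Fin N) (a : Fin n) (s : Fin N → Fin n) :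
    Matrix.vecMul (bv (a, s)) (Rsite n N β u τ i) =
      fW β (om β u τ) a (s i) • bv (s i, Function.update s i a)
      + gW (om β u τ) a (s i) • bv (F := F) (a, s) := by
  rw [← Rsite_row]
  exact Matrix.single_one_vecMul _ _

/-- The exchange operator on sites `j, j'`. -/
def Sop [Field F] (n N : ℕ) (β o : F) (j j' : Fin N) :
    Matrix (Fin N → Fin n) (Fin N → Fin n) F := Matrix.of fun s =>
  fW β o (s j') (s j) • bv s + gW o (s j') (s j) • bv (F := F) (s ∘ Equiv.swap j j')

lemma bv_Sop [Field F] (n N : ℕ) (β o : F) (j j' : Fin N) (s : Fin N → Fin n) :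
    Matrix.vecMul (bv s) (Sop n N β o j j') =
      fW β o (s j') (s j) • bv s + gW o (s j') (s j) • bv (F := F) (s ∘ Equiv.swap j j') :=
  Matrix.single_one_vecMul _ _

def Sfull [Field F] (n N : ℕ) (β o : F) (j j' : Fin N) :
    Matrix (Fin n × (Fin N → Fin n)) (Fin n × (Fin N → Fin n)) F := Matrix.of fun p q =>
  if p.1 = q.1 then Sop n N β o j j' p.2 q.2 else 0

lemma bv_Sfull [Field F] (n N : ℕ) (β o : F) (j j' : Fin N) (a : Fin n) (s : Fin N → Fin n) :
    Matrix.vecMul (bv (a, s)) (Sfull n N β o j j') =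
      fW β o (s j') (s j) • bv (a, s)
        + gW o (s j') (s j) • bv (F := F) (a, s ∘ Equiv.swap j j') := by
  refine (Matrix.single_one_vecMul _ _).trans ?_
  funext ⟨c, s'⟩
  by_cases h : a = c
  · subst h
    simp [Sfull, Sop, Matrix.row, Pi.single_apply]
  · have h' : ¬ c = a := fun e => h e.symm
    simp [Sfull, Sop, Matrix.row, Pi.single_apply, h, h']

lemma mat_ext_bv [Field F] {ι : Type*} [Fintype ι] [DecidableEq ι] {A B : Matrix ι ι F}
    (h : ∀ p, Matrix.vecMul (bv p) A = Matrix.vecMul (bv p) B) : A = B := by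
  ext p q
  have := congrFun (h p) q
  simpa [bv] using this

/-- Sites other than `j, j'` commute with the exchange operator. -/
lemma Rsite_comm_Sfull [Field F] (n N : ℕ) (β u τ o : F) (i j j' : Fin N) (h : i ≠ j)
    (h' : i ≠ j') :
    Rsite n N β u τ i * Sfull n N β o j j' = Sfull n N β o j j' * Rsite n N β u τ i := by
  apply mat_ext_bv
  rintro ⟨a, s⟩
  have e1 : (Equiv.swap j j') i = i := Equiv.swap_apply_of_ne_of_ne h h'
  have e2 : ∀ b, Function.update s i b ∘ Equiv.swap j j'
      = Function.update (s ∘ Equiv.swap j j') i b := by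
    intro b
    funext k
    by_cases hk : k = i
    · subst hk; simp [e1]
    · have : Equiv.swap j j' k ≠ i := by
        intro e; apply hk; rw [← e1] at e; exact (Equiv.swap j j').injective e
      simp [hk, this]
  simp only [← Matrix.vecMul_vecMul, bv_Rsite, bv_Sfull, Matrix.add_vecMul, Matrix.smul_vecMul,
    e2, Function.comp_apply, e1, Function.update_of_ne h.symm, Function.update_of_ne h'.symm]
  module

lemma YB [Field F] (n N : ℕ) (β u x y : F) (hx : 1 + β * x ≠ 0) (hy : 1 + β * y ≠ 0)
    (j j' : Fin N) (hj : j ≠ j') :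
    Rsite n N β u y j' * Rsite n N β u x j * Sfull n N β (om β y x) j j' =
      Sfull n N β (om β y x) j j' * (Rsite n N β u x j' * Rsite n N β u y j) := by
  apply mat_ext_bv
  rintro ⟨a, s⟩
  set e : Fin n → Fin n → Fin n → (Fin n × (Fin N → Fin n) → F) := fun x y z =>
    bv (x, Function.update (Function.update s j y) j' z) with he
  have e0 : bv (F := F) (a, s) = e a (s j) (s j') := by simp [he]
  have e1 : ∀ τ x y z, Matrix.vecMul (e x y z) (Rsite n N β u τ j) =
      fW β (om β u τ) x y • e y x z + gW (om β u τ) x y • e x y z := by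
    intro τ x y z
    simp only [he, bv_Rsite]
    rw [Function.update_of_ne hj, Function.update_self, Function.update_comm hj.symm,
      Function.update_idem, Function.update_comm hj]
  have e2 : ∀ τ x y z, Matrix.vecMul (e x y z) (Rsite n N β u τ j') =
      fW β (om β u τ) x z • e z y x + gW (om β u τ) x z • e x y z := by
    intro τ x y z
    simp only [he, bv_Rsite, Function.update_self, Function.update_idem]
  have e3 : ∀ o x y z, Matrix.vecMul (e x y z) (Sfull n N β o j j') =
      fW β o z y • e x y z + gW o z y • e x z y := by
    intro o x y z
    have : Function.update (Function.update s j y) j' z ∘ Equiv.swap j j'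
        = Function.update (Function.update s j z) j' y := by
      funext k
      by_cases h1 : k = j
      · subst h1; simp [hj]
      · by_cases h2 : k = j'
        · subst h2; simp [hj]
        · simp [Equiv.swap_apply_of_ne_of_ne h1 h2, h1, h2]
    simp only [he, bv_Sfull, Function.update_self, Function.update_of_ne hj, this]
  rw [e0]
  generalize s j = b
  generalize s j' = c
  clear_value e
  simp only [← Matrix.vecMul_vecMul, e1, e2, e3, Matrix.add_vecMul, Matrix.smul_vecMul]
  funext q
  simp only [Pi.add_apply, Pi.smul_apply, smul_eq_mul]
  have key : ∀ a b : Fin n, (a < b ∧ ¬ b < a) ∨ a = b ∨ (b < a ∧ ¬ a < b) := by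
    intro a b; omega
  have ha := key a b
  have hb := key b c
  have hc := key a c
  clear key
  rcases ha with ha | ha | ha <;> rcases hb with hb | hb | hb <;> rcases hc with hc | hc | hc <;>
    first
    | (exfalso; omega)
    | (try subst ha
       try subst hb
       try subst hc
       simp only [fW, gW, lt_irrefl, if_true, if_false, *, om]
       try field_simp
       try ring)

lemma Tmono_eq [Field F] (n N : ℕ) (β u : F) (t : Fin N → F) :
    Tmono n N β u t = (((List.finRange N).reverse).map
      fun i : Fin N => Rsite n N β u (t i) i).prod := by
  rw [Tmono, List.ofFn_eq_map, List.map_reverse]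

lemma finRange_split {N : ℕ} (p : ℕ) (hp : p < N) :
    (List.finRange N) = (List.finRange N).take p ++
      (⟨p, hp⟩ : Fin N) :: (List.finRange N).drop (p + 1) := by
  conv_lhs => rw [← List.take_append_drop p (List.finRange N)]
  rw [List.drop_eq_getElem_cons (by simpa using hp)]
  simp

lemma mem_take_finRange {N p : ℕ} {k : Fin N} :
    k ∈ (List.finRange N).take p ↔ (k : ℕ) < p := by
  rw [List.mem_take_iff_getElem]
  constructor
  · rintro ⟨i, hi, rfl⟩
    simp at hi ⊢
    omega
  · intro h
    exact ⟨k, by simp [h], by simp⟩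

lemma mem_drop_finRange {N p : ℕ} {k : Fin N} :
    k ∈ (List.finRange N).drop p ↔ p ≤ (k : ℕ) := by
  rw [List.mem_drop_iff_getElem]
  constructor
  · rintro ⟨i, hi, rfl⟩
    simp
  · intro h
    exact ⟨k - p, by have := k.isLt; simp; omega, by ext; simp; omega⟩

lemma list_comm [Field F] (n N : ℕ) (β u o : F) (j j' : Fin N) (t t' : Fin N → F)
    (l : List (Fin N)) (h : ∀ k ∈ l, k ≠ j ∧ k ≠ j' ∧ t k = t' k) :
    (l.map fun i : Fin N => Rsite n N β u (t i) i).prod * Sfull n N β o j j' =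
      Sfull n N β o j j' * (l.map fun i : Fin N => Rsite n N β u (t' i) i).prod := by
  induction l with
  | nil => simp
  | cons k l ih =>
    obtain ⟨h1, h2, h3⟩ := h k (by simp)
    have ih := ih fun k hk => h k (by simp [hk])
    simp only [List.map_cons, List.prod_cons]
    rw [Matrix.mul_assoc, ih, ← Matrix.mul_assoc, h3, Rsite_comm_Sfull _ _ _ _ _ _ _ _ _ h1 h2,
      Matrix.mul_assoc]

lemma Tmono_Sfull [Field F] (n N : ℕ) (β u : F) (t : Fin N → F) (ht : ∀ k, 1 + β * t k ≠ 0)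
    (j : ℕ) (hj : j + 1 < N) :
    Tmono n N β u t *
        Sfull n N β (om β (t ⟨j + 1, hj⟩) (t ⟨j, by omega⟩)) ⟨j, by omega⟩ ⟨j + 1, hj⟩ =
      Sfull n N β (om β (t ⟨j + 1, hj⟩) (t ⟨j, by omega⟩)) ⟨j, by omega⟩ ⟨j + 1, hj⟩ *
        Tmono n N β u (t ∘ Equiv.swap ⟨j, by omega⟩ ⟨j + 1, hj⟩) := by
  have hj0 : j < N := by omega
  set J : Fin N := ⟨j, hj0⟩ with hJ
  set J' : Fin N := ⟨j + 1, hj⟩ with hJ'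
  have hne : J ≠ J' := by simp [hJ, hJ']
  set t' := t ∘ Equiv.swap J J' with ht'
  have t1 : t' J = t J' := by simp [ht']
  have t2 : t' J' = t J := by simp [ht']
  have t3 : ∀ k, k ≠ J → k ≠ J' → t k = t' k := fun k h h' => by
    simp [ht', Equiv.swap_apply_of_ne_of_ne h h']
  have hs : (List.finRange N) = (List.finRange N).take j ++
      J :: J' :: (List.finRange N).drop (j + 2) := by
    conv_lhs => rw [finRange_split j hj0]
    rw [List.drop_eq_getElem_cons (by simpa using hj)]
    simp [hJ, hJ']
  rw [Tmono_eq, Tmono_eq, hs]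
  have hA : ∀ k ∈ ((List.finRange N).take j).reverse, k ≠ J ∧ k ≠ J' ∧ t k = t' k := by
    intro k hk
    rw [List.mem_reverse, mem_take_finRange] at hk
    have h1 : k ≠ J := by rintro rfl; simp [hJ] at hk
    have h2 : k ≠ J' := by rintro rfl; simp [hJ'] at hk
    exact ⟨h1, h2, t3 k h1 h2⟩
  have hB : ∀ k ∈ ((List.finRange N).drop (j + 2)).reverse, k ≠ J ∧ k ≠ J' ∧ t k = t' k := by
    intro k hk
    rw [List.mem_reverse, mem_drop_finRange] at hk
    have h1 : k ≠ J := by rintro rfl; simp [hJ] at hk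
    have h2 : k ≠ J' := by rintro rfl; simp [hJ'] at hk
    exact ⟨h1, h2, t3 k h1 h2⟩
  have cA := list_comm n N β u (om β (t J') (t J)) J J' t t' _ hA
  have cB := list_comm n N β u (om β (t J') (t J)) J J' t t' _ hB
  have yb := YB n N β u (t J) (t J') (ht _) (ht _) J J' hne
  simp only [List.reverse_append, List.reverse_cons, List.map_append, List.prod_append,
    List.map_cons, List.map_nil, List.prod_cons, List.prod_nil, mul_one, t1, t2]
  generalize (List.map (fun i => Rsite n N β u (t i) i) ((List.finRange N).take j).reverse).prod
    = A at *
  generalize (List.map (fun i => Rsite n N β u (t' i) i) ((List.finRange N).take j).reverse).prod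
    = A' at *
  generalize (List.map (fun i => Rsite n N β u (t i) i)
    ((List.finRange N).drop (j + 2)).reverse).prod = B at *
  generalize (List.map (fun i => Rsite n N β u (t' i) i)
    ((List.finRange N).drop (j + 2)).reverse).prod = B' at *
  generalize Sfull n N β (om β (t J') (t J)) J J' = S at *
  calc _ = B * (Rsite n N β u (t J') J' * Rsite n N β u (t J) J) * (A * S) := by
        simp only [Matrix.mul_assoc]
    _ = B * (Rsite n N β u (t J') J' * Rsite n N β u (t J) J * S) * A' := by
        rw [cA]; simp only [Matrix.mul_assoc]
    _ = (B * S) * (Rsite n N β u (t J) J' * Rsite n N β u (t J') J) * A' := by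
        rw [yb]; simp only [Matrix.mul_assoc]
    _ = _ := by rw [cB]; simp only [Matrix.mul_assoc]

lemma blockOp_Sop [Field F] (n N : ℕ) (β u : F) (t : Fin N → F) (ht : ∀ k, 1 + β * t k ≠ 0)
    (j : ℕ) (hj : j + 1 < N) (r c : Fin n) :
    blockOp n N β u t r c *
        Sop n N β (om β (t ⟨j + 1, hj⟩) (t ⟨j, by omega⟩)) ⟨j, by omega⟩ ⟨j + 1, hj⟩ =
      Sop n N β (om β (t ⟨j + 1, hj⟩) (t ⟨j, by omega⟩)) ⟨j, by omega⟩ ⟨j + 1, hj⟩ *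
        blockOp n N β u (t ∘ Equiv.swap ⟨j, by omega⟩ ⟨j + 1, hj⟩) r c := by
  ext s s'
  have h := congrFun (congrFun (Tmono_Sfull n N β u t ht j hj) (r, s)) (c, s')
  simpa [Matrix.mul_apply, Fintype.sum_prod_type, Sfull, blockOp, Finset.sum_ite_irrel,
    ite_mul, mul_ite, Finset.sum_comm (s := (Finset.univ : Finset (Fin n)))] using h

lemma fullDesc_Sop [Field F] (M : ℕ) (β : F) (t : Fin (M + 2) → F)
    (ht : ∀ k, 1 + β * t k ≠ 0) (ii : Fin (M + 1)) (σ : Fin (M + 2) → F)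
    (j : ℕ) (hj : j + 1 < M + 2) :
    fullDesc M β t ii σ *
        Sop _ _ β (om β (t ⟨j + 1, hj⟩) (t ⟨j, by omega⟩)) ⟨j, by omega⟩ ⟨j + 1, hj⟩ =
      Sop _ _ β (om β (t ⟨j + 1, hj⟩) (t ⟨j, by omega⟩)) ⟨j, by omega⟩ ⟨j + 1, hj⟩ *
        fullDesc M β (t ∘ Equiv.swap ⟨j, by omega⟩ ⟨j + 1, hj⟩) ii σ := by
  have key := fun u r c => blockOp_Sop (M + 2) (M + 2) β u t ht j hj r c
  generalize Sop (M + 2) (M + 2) β (om β (t ⟨j + 1, hj⟩) (t ⟨j, by omega⟩)) ⟨j, by omega⟩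
    ⟨j + 1, hj⟩ = S at *
  generalize t ∘ Equiv.swap ⟨j, by omega⟩ ⟨j + 1, hj⟩ = t' at *
  have top : ∀ c hc, topString M β t σ c hc * S = S * topString M β t' σ c hc := by
    intro c hc
    unfold topString
    rw [List.ofFn_eq_map, List.ofFn_eq_map]
    induction List.finRange c with
    | nil => simp
    | cons k l ih =>
      simp only [List.map_cons, List.prod_cons]
      rw [Matrix.mul_assoc, ih, ← Matrix.mul_assoc, key, Matrix.mul_assoc]
  unfold fullDesc
  rw [Matrix.mul_assoc, key, ← Matrix.mul_assoc, Matrix.mul_assoc (topString _ _ _ _ _ _), key,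
    ← Matrix.mul_assoc, top]
  simp only [Matrix.mul_assoc]

/-! ### Explicit action on special states -/

lemma loss [Field F] (n N : ℕ) (β u : F) (t : Fin N → F) (c : Fin n) (s' : Fin N → Fin n)
    (l : List (Fin N)) : ∀ (a : Fin n) (s : Fin N → Fin n), a ≠ c → (∀ k ∈ l, s k ≠ c) →
    Matrix.vecMul (bv (a, s)) (l.map fun i : Fin N => Rsite n N β u (t i) i).prod (c, s') = 0 := by
  induction l with
  | nil =>
    intro a s ha _
    simp [ha.symm]
  | cons k l ih =>
    intro a s ha hs
    simp only [List.map_cons, List.prod_cons]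
    rw [← Matrix.vecMul_vecMul, bv_Rsite, Matrix.add_vecMul, Matrix.smul_vecMul,
      Matrix.smul_vecMul, Pi.add_apply, Pi.smul_apply, Pi.smul_apply, ih a s ha, ih]
    · simp
    · exact hs k (by simp)
    · intro k' hk'
      by_cases h : k' = k
      · subst h; simpa using ha
      · simpa [h] using hs k' (by simp [hk'])
    · intro k' hk'
      exact hs k' (by simp [hk'])

lemma pass_below [Field F] (n N : ℕ) (β u : F) (t : Fin N → F) (c : Fin n) (s s' : Fin N → Fin n)
    (l : List (Fin N)) (hl : l.Nodup) (hs : ∀ k ∈ l, s k < c) :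
    Matrix.vecMul (bv (c, s)) (l.map fun i : Fin N => Rsite n N β u (t i) i).prod (c, s') =
      (l.map fun k => om β u (t k)).prod * bv s s' := by
  induction l with
  | nil =>
    simp [Pi.single_apply]
  | cons k l ih =>
    have hk := hs k (by simp)
    rw [List.nodup_cons] at hl
    simp only [List.map_cons, List.prod_cons]
    rw [← Matrix.vecMul_vecMul, bv_Rsite, Matrix.add_vecMul, Matrix.smul_vecMul,
      Matrix.smul_vecMul, Pi.add_apply, Pi.smul_apply, Pi.smul_apply,
      ih hl.2 fun k' hk' => hs k' (by simp [hk']), loss]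
    · simp [gW, hk, mul_assoc]
    · exact hk.ne
    · intro k' hk'
      have h : k' ≠ k := by rintro rfl; exact hl.1 hk'
      simpa [h] using (hs k' (by simp [hk'])).ne

lemma bv_swap [Field F] (n N : ℕ) (β u τ : F) (i : Fin N) (a : Fin n) (s : Fin N → Fin n)
    (h : a ≤ s i) :
    Matrix.vecMul (bv (a, s)) (Rsite n N β u τ i) = bv (F := F) (s i, Function.update s i a) := by
  rw [bv_Rsite]
  simp [fW, gW, h.not_gt]

lemma zeros [Field F] (n N : ℕ) (β u : F) (t : Fin N → F) (a : Fin n) (s : Fin N → Fin n)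
    (l : List (Fin N)) (hs : ∀ k ∈ l, s k = a) :
    Matrix.vecMul (bv (a, s)) (l.map fun i : Fin N => Rsite n N β u (t i) i).prod =
      bv (F := F) (a, s) := by
  induction l with
  | nil => simp
  | cons k l ih =>
    have hk := hs k (by simp)
    have e : Function.update s k a = s := by rw [← hk]; simp
    simp only [List.map_cons, List.prod_cons]
    rw [← Matrix.vecMul_vecMul, bv_swap _ _ _ _ _ _ _ _ hk.ge, e, hk]
    exact ih fun k' hk' => hs k' (by simp [hk'])

lemma block_gen [Field F] (n N : ℕ) (β u : F) (t : Fin N → F) (r c d : Fin n)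
    (s s1 : Fin N → Fin n) (p : ℕ) (hp : p < N)
    (h0 : Matrix.vecMul (bv (r, s)) ((((List.finRange N).drop (p + 1)).reverse).map
      fun i : Fin N => Rsite n N β u (t i) i).prod = bv (F := F) (d, s1))
    (hc : s1 ⟨p, hp⟩ = c) (hd : d ≤ c) (hs : ∀ k : Fin N, (k : ℕ) < p → s1 k < c) :
    Matrix.vecMul (bv s) (blockOp n N β u t r c) =
      ((((List.finRange N).take p).reverse).map fun k => om β u (t k)).prod •
        bv (F := F) (Function.update s1 ⟨p, hp⟩ d) := by
  funext s'
  have e : Matrix.vecMul (bv s) (blockOp n N β u t r c) s' =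
      Matrix.vecMul (bv (r, s)) (Tmono n N β u t) (c, s') := by
    simp [blockOp, bv]
  rw [e, Tmono_eq, finRange_split p hp]
  simp only [List.reverse_append, List.reverse_cons, List.map_append, List.prod_append,
    List.map_cons, List.map_nil, List.prod_cons, List.prod_nil, mul_one]
  rw [← Matrix.vecMul_vecMul, ← Matrix.vecMul_vecMul, h0, bv_swap _ _ _ _ _ _ _ _ (hc ▸ hd), hc,
    pass_below]
  · have : List.take p (List.take p (List.finRange N) ++
        (⟨p, hp⟩ : Fin N) :: List.drop (p + 1) (List.finRange N)) = List.take p (List.finRange N) := by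
      rw [← finRange_split p hp]
    simp [this]
  · exact List.nodup_reverse.2 ((List.nodup_finRange N).sublist (List.take_sublist _ _))
  · intro k hk
    rw [List.mem_reverse, mem_take_finRange] at hk
    have : k ≠ ⟨p, hp⟩ := by rintro rfl; simp at hk
    simpa [this] using hs k hk

/-- weight of passing below `p`. -/
def wt [Field F] {N : ℕ} (β u : F) (t : Fin N → F) (p : ℕ) : F :=
  ((((List.finRange N).take p).reverse).map fun k => om β u (t k)).prod

lemma wt_succ [Field F] {N : ℕ} (β u : F) (t : Fin N → F) (p : ℕ) (hp : p < N) :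
    wt β u t (p + 1) = om β u (t ⟨p, hp⟩) * wt β u t p := by
  unfold wt
  rw [List.take_add_one]
  simp [hp]

lemma block_one [Field F] (M : ℕ) (β u : F) (t : Fin (M + 2) → F) (c : Fin (M + 2))
    (s : Fin (M + 2) → Fin (M + 2)) (p : ℕ) (hp : p < M + 2)
    (h0 : ∀ k : Fin (M + 2), p < (k : ℕ) → s k = 0)
    (hc : s ⟨p, hp⟩ = c) (hs : ∀ k : Fin (M + 2), (k : ℕ) < p → s k < c) :
    Matrix.vecMul (bv s) (blockOp (M + 2) (M + 2) β u t 0 c) =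
      wt β u t p • bv (F := F) (Function.update s ⟨p, hp⟩ 0) := by
  refine block_gen _ _ _ _ _ _ _ _ _ _ _ hp (zeros _ _ _ _ _ _ _ _ ?_) hc (Fin.zero_le _) hs
  intro k hk
  rw [List.mem_reverse, mem_drop_finRange] at hk
  exact h0 k hk

lemma block_two [Field F] (M : ℕ) (β u : F) (t : Fin (M + 2) → F) (c : Fin (M + 2))
    (s : Fin (M + 2) → Fin (M + 2)) (p : ℕ) (hp : p + 1 < M + 2)
    (h0 : ∀ k : Fin (M + 2), p + 1 < (k : ℕ) → s k = 0)
    (hc : s ⟨p, by omega⟩ = c) (hd : s ⟨p + 1, hp⟩ < c)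
    (hs : ∀ k : Fin (M + 2), (k : ℕ) < p → s k < c) :
    Matrix.vecMul (bv s) (blockOp (M + 2) (M + 2) β u t 0 c) =
      wt β u t p • bv (F := F) (Function.update (Function.update s ⟨p + 1, hp⟩ 0) ⟨p, by omega⟩
        (s ⟨p + 1, hp⟩)) := by
  refine block_gen _ _ _ _ _ _ _ (s ⟨p + 1, hp⟩) _ _ _ (by omega) ?_ ?_ hd.le ?_
  · rw [List.drop_eq_getElem_cons (by simpa using hp)]
    simp only [List.reverse_cons, List.map_append, List.prod_append,
      List.map_cons, List.map_nil, List.prod_cons, List.prod_nil, mul_one]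
    rw [← Matrix.vecMul_vecMul, zeros]
    · rw [bv_swap _ _ _ _ _ _ _ _ (Fin.zero_le _)]
      simp
    · intro k hk
      rw [List.mem_reverse, mem_drop_finRange] at hk
      exact h0 k hk
  · simpa using hc
  · intro k hk
    have : k ≠ ⟨p + 1, hp⟩ := by rintro rfl; simp at hk
    simpa [this] using hs k hk

/-- Truncated state. -/
def trunc {M : ℕ} (w : Fin (M + 2) → Fin (M + 2)) (m : ℕ) : Fin (M + 2) → Fin (M + 2) :=
  fun k => if (k : ℕ) ≤ m then w k else 0

lemma top_trunc [Field F] (M : ℕ) (β : F) (t σ : Fin (M + 2) → F) (m : ℕ)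
    (w : Fin (M + 2) → Fin (M + 2)) (hw : ∀ k : Fin (M + 2), m < (k : ℕ) → w k = k)
    (hw' : ∀ k : Fin (M + 2), (k : ℕ) ≤ m → (w k : ℕ) ≤ m) (c : ℕ) (hc : c + m ≤ M + 1) :
    Matrix.vecMul (bv w) (topString M β t σ c (by omega)) =
      (List.ofFn fun a : Fin c => wt β (σ ⟨a, by omega⟩) t (M + 1 - a)).prod •
        bv (F := F) (trunc w (M + 1 - c)) := by
  induction c with
  | zero =>
    have : trunc w (M + 1 - 0) = w := by
      funext k; have := k.isLt; simp [trunc]; omega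
    rw [this]
    simp [topString]
  | succ c ih =>
    have ih := ih (by omega)
    have e : topString M β t σ (c + 1) (by omega) = topString M β t σ c (by omega) *
        blockOp (M + 2) (M + 2) β (σ ⟨c, by omega⟩) t 0 ⟨M + 1 - c, by omega⟩ := by
      unfold topString
      rw [List.ofFn_succ']
      simp
    rw [e, ← Matrix.vecMul_vecMul, ih, Matrix.smul_vecMul, block_one M β _ t _ _ (M + 1 - c)
      (by omega)]
    · rw [List.ofFn_succ' (n := c), smul_smul]
      have : Function.update (trunc w (M + 1 - c)) ⟨M + 1 - c, by omega⟩ 0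
          = trunc w (M + 1 - (c + 1)) := by
        funext k
        by_cases hk : k = ⟨M + 1 - c, by omega⟩
        · subst hk; simp [trunc]; omega
        · have hk' : (k : ℕ) ≠ M + 1 - c := fun h => hk (Fin.ext h)
          have : (k : ℕ) ≤ M + 1 - c ↔ (k : ℕ) ≤ M + 1 - (c + 1) := by omega
          simp only [Function.update_of_ne hk, trunc, this]
      rw [this]
      simp
    · intro k hk
      simp [trunc]; omega
    · simp [trunc]
      rw [hw _ (by simp; omega)]
    · intro k hk
      have : (k : ℕ) ≤ M + 1 - c := by omega
      simp only [trunc, this, if_true]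
      rw [Fin.lt_def]
      by_cases h : m < (k : ℕ)
      · rw [hw k h]; exact hk
      · have := hw' k (by omega)
        simp; omega

lemma base_id [Field F] (M : ℕ) (β : F) (t σ : Fin (M + 2) → F) (ii : Fin (M + 1)) :
    Matrix.vecMul (bv fun j => j) (fullDesc M β t ii σ) =
      ((List.ofFn fun a : Fin (M - (ii : ℕ)) => wt β (σ ⟨a, by omega⟩) t (M + 1 - a)).prod *
        wt β (σ ⟨M - (ii : ℕ), by omega⟩) t (ii + 1) *
        wt β (σ ⟨M + 1 - (ii : ℕ), by omega⟩) t ii) •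
        bv (F := F) (fun k : Fin (M + 2) => if (k : ℕ) < ii then k else 0) := by
  have hii := ii.isLt
  unfold fullDesc
  rw [← Matrix.vecMul_vecMul, ← Matrix.vecMul_vecMul,
    top_trunc M β t σ (ii + 1) (fun j => j) (fun k _ => rfl) (fun k h => h) _ (by omega),
    Matrix.smul_vecMul, block_one M β _ t _ _ (ii + 1) (by omega), Matrix.smul_vecMul,
    Matrix.smul_vecMul, block_one M β _ t _ _ ii (by omega), smul_smul, smul_smul, mul_assoc]
  · congr 2
    funext k
    simp only [Function.update_apply, trunc, Fin.ext_iff]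
    split_ifs <;> first | rfl | omega
  · intro k hk
    simp only [Function.update_apply, trunc, Fin.ext_iff]
    split_ifs <;> first | rfl | omega
  · simp only [Function.update_apply, trunc, Fin.ext_iff]
    rw [if_neg (by simp), if_pos (by omega)]
    simp
  · intro k hk
    simp only [Function.update_apply, trunc, Fin.ext_iff]
    rw [if_neg (by omega), if_pos (by omega), Fin.lt_def]
    simpa using hk
  · intro k hk
    simp only [trunc]
    rw [if_neg (by omega)]
  · simp only [trunc]
    rw [if_pos (by omega)]
    ext; simp
  · intro k hk
    simp only [trunc]
    rw [if_pos (by omega), Fin.lt_def]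
    simpa using hk

lemma base_si [Field F] (M : ℕ) (β : F) (t σ : Fin (M + 2) → F) (ii : Fin (M + 1)) :
    Matrix.vecMul (bv fun j => Equiv.swap ii.castSucc ii.succ j) (fullDesc M β t ii σ) =
      ((List.ofFn fun a : Fin (M - (ii : ℕ)) => wt β (σ ⟨a, by omega⟩) t (M + 1 - a)).prod *
        wt β (σ ⟨M - (ii : ℕ), by omega⟩) t ii *
        wt β (σ ⟨M + 1 - (ii : ℕ), by omega⟩) t ii) •
        bv (F := F) (fun k : Fin (M + 2) => if (k : ℕ) < ii then k else 0) := by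
  have hii := ii.isLt
  have sw : ∀ k : Fin (M + 2), ((Equiv.swap ii.castSucc ii.succ k : Fin (M + 2)) : ℕ) =
      if (k : ℕ) = ii then (ii : ℕ) + 1 else if (k : ℕ) = ii + 1 then (ii : ℕ) else k := by
    intro k
    rw [Equiv.swap_apply_def]
    simp only [Fin.ext_iff, Fin.val_castSucc, Fin.val_succ]
    split_ifs <;> simp
  obtain ⟨w, hw⟩ : ∃ w : Fin (M + 2) → Fin (M + 2),
    w = fun j => Equiv.swap ii.castSucc ii.succ j := ⟨_, rfl⟩
  rw [← hw]
  replace sw : ∀ k : Fin (M + 2), ((w k : Fin (M + 2)) : ℕ) =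
      if (k : ℕ) = ii then (ii : ℕ) + 1 else if (k : ℕ) = ii + 1 then (ii : ℕ) else k := by
    intro k; rw [hw]; exact sw k
  unfold fullDesc
  rw [← Matrix.vecMul_vecMul, ← Matrix.vecMul_vecMul,
    top_trunc M β t σ (ii + 1) w (fun k hk => by
      ext; rw [sw]; split_ifs <;> omega) (fun k h => by
      rw [sw]; split_ifs <;> omega) _ (by omega),
    Matrix.smul_vecMul, block_two M β _ t _ _ ii (by omega), Matrix.smul_vecMul,
    Matrix.smul_vecMul, block_one M β _ t _ _ ii (by omega), smul_smul, smul_smul, mul_assoc]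
  · congr 2
    funext k
    ext
    simp only [Function.update_apply, trunc, Fin.ext_iff, apply_ite Fin.val, sw, Fin.val_zero]
    split_ifs <;> first | rfl | omega
  · intro k hk
    ext
    simp only [Function.update_apply, trunc, Fin.ext_iff, apply_ite Fin.val, sw, Fin.val_zero]
    split_ifs <;> first | rfl | omega
  · ext
    simp only [Function.update_apply, trunc, Fin.ext_iff, apply_ite Fin.val, sw, Fin.val_zero,
      Fin.val_castSucc]
    split_ifs <;> first | rfl | omega
  · intro k hk
    rw [Fin.lt_def]
    simp only [Function.update_apply, trunc, Fin.ext_iff, apply_ite Fin.val, sw, Fin.val_zero,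
      Fin.val_castSucc]
    split_ifs <;> omega
  · intro k hk
    simp only [trunc]
    rw [if_neg (by omega)]
  · ext
    simp only [trunc, apply_ite Fin.val, sw, Fin.val_zero, Fin.val_succ]
    split_ifs <;> omega
  · rw [Fin.lt_def]
    simp only [trunc, apply_ite Fin.val, sw, Fin.val_zero, Fin.val_succ]
    split_ifs <;> omega
  · intro k hk
    rw [Fin.lt_def]
    simp only [trunc, apply_ite Fin.val, sw, Fin.val_zero, Fin.val_succ]
    split_ifs <;> omega

/-- The claim, as an identity of covectors cleared of denominators. -/
def Claim [Field F] (M : ℕ) (β : F) (t σ : Fin (M + 2) → F) (ii : Fin (M + 1))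
    (π : Equiv.Perm (Fin (M + 2))) : Prop :=
  (σ ⟨M - (ii : ℕ), by omega⟩ - σ ⟨M + 1 - (ii : ℕ), by omega⟩) •
    Matrix.vecMul (bv fun j => (Equiv.swap ii.castSucc ii.succ * π) j) (fullDesc M β t ii σ) =
  (1 + β * σ ⟨M + 1 - (ii : ℕ), by omega⟩) •
    Matrix.vecMul (bv (F := F) fun j => π j) (fullDesc M β t ii σ) -
  (1 + β * σ ⟨M - (ii : ℕ), by omega⟩) •
    Matrix.vecMul (bv (F := F) fun j => π j) (fullDesc M β t ii fun j =>
      σ (Equiv.swap (⟨M - (ii : ℕ), by omega⟩ : Fin (M + 2)) ⟨M + 1 - (ii : ℕ), by omega⟩ j))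

lemma claim_one [Field F] (M : ℕ) (β : F) (t σ : Fin (M + 2) → F) (ii : Fin (M + 1))
    (ht : ∀ k, 1 + β * t k ≠ 0) : Claim M β t σ ii 1 := by
  have hii := ii.isLt
  unfold Claim
  simp only [mul_one, Equiv.Perm.coe_one, id]
  rw [base_si, base_id, base_id, wt_succ _ _ _ _ (by omega), wt_succ _ _ _ _ (by omega),
    Equiv.swap_apply_left, Equiv.swap_apply_right, smul_smul, smul_smul, smul_smul, ← sub_smul]
  have : ∀ a : Fin (M - (ii : ℕ)), Equiv.swap (⟨M - (ii : ℕ), by omega⟩ : Fin (M + 2))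
      ⟨M + 1 - (ii : ℕ), by omega⟩ ⟨a, by omega⟩ = ⟨a, by omega⟩ := by
    intro a
    apply Equiv.swap_apply_of_ne_of_ne <;> simp only [ne_eq, Fin.ext_iff] <;> omega
  simp only [this]
  congr 1
  have := ht ⟨ii, by omega⟩
  unfold om
  field_simp
  ring

lemma step [Field F] (M : ℕ) (β : F) (t σ : Fin (M + 2) → F) (ii : Fin (M + 1))
    (ht : ∀ k, 1 + β * t k ≠ 0) (j : ℕ) (hj : j + 1 < M + 2) (w : Fin (M + 2) → Fin (M + 2))
    (hw : w ⟨j, by omega⟩ < w ⟨j + 1, hj⟩) :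
    om β (t ⟨j + 1, hj⟩) (t ⟨j, by omega⟩) •
      Matrix.vecMul (bv (F := F) (w ∘ Equiv.swap ⟨j, by omega⟩ ⟨j + 1, hj⟩))
        (fullDesc M β (t ∘ Equiv.swap ⟨j, by omega⟩ ⟨j + 1, hj⟩) ii σ) =
    Matrix.vecMul (Matrix.vecMul (bv w) (fullDesc M β t ii σ))
      (Sop _ _ β (om β (t ⟨j + 1, hj⟩) (t ⟨j, by omega⟩)) ⟨j, by omega⟩ ⟨j + 1, hj⟩) -
    (1 + β * om β (t ⟨j + 1, hj⟩) (t ⟨j, by omega⟩)) •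
      Matrix.vecMul (bv w) (fullDesc M β (t ∘ Equiv.swap ⟨j, by omega⟩ ⟨j + 1, hj⟩) ii σ) := by
  rw [Matrix.vecMul_vecMul, fullDesc_Sop _ _ _ ht, ← Matrix.vecMul_vecMul, bv_Sop,
    Matrix.add_vecMul, Matrix.smul_vecMul, Matrix.smul_vecMul]
  simp [fW, gW, hw]

lemma claim_step [Field F] (M : ℕ) (β : F) (t σ : Fin (M + 2) → F) (ii : Fin (M + 1))
    (ht : ∀ k, 1 + β * t k ≠ 0) (hti : Function.Injective t) (j : ℕ) (hj : j + 1 < M + 2)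
    (w : Equiv.Perm (Fin (M + 2)))
    (hw : w ⟨j, by omega⟩ < w ⟨j + 1, hj⟩)
    (hw' : (Equiv.swap ii.castSucc ii.succ * w) ⟨j, by omega⟩ <
      (Equiv.swap ii.castSucc ii.succ * w) ⟨j + 1, hj⟩)
    (h1 : Claim M β t σ ii w)
    (h2 : Claim M β (t ∘ Equiv.swap ⟨j, by omega⟩ ⟨j + 1, hj⟩) σ ii w) :
    Claim M β (t ∘ Equiv.swap ⟨j, by omega⟩ ⟨j + 1, hj⟩) σ ii
      (w * Equiv.swap ⟨j, by omega⟩ ⟨j + 1, hj⟩) := by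
  have ho : om β (t ⟨j + 1, hj⟩) (t ⟨j, by omega⟩) ≠ 0 := by
    refine div_ne_zero (sub_ne_zero.2 fun h => ?_) (ht _)
    have := hti h
    simp at this
  have A := step M β t σ ii ht j hj _ hw'
  have B := step M β t σ ii ht j hj _ hw
  have C := step M β t (fun j => σ (Equiv.swap (⟨M - (ii : ℕ), by omega⟩ : Fin (M + 2))
    ⟨M + 1 - (ii : ℕ), by omega⟩ j)) ii ht j hj _ hw
  unfold Claim at *
  have h1' := congrArg (fun v => Matrix.vecMul v
    (Sop _ _ β (om β (t ⟨j + 1, hj⟩) (t ⟨j, by omega⟩)) ⟨j, by omega⟩ ⟨j + 1, hj⟩)) h1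
  simp only [Matrix.sub_vecMul, Matrix.smul_vecMul] at h1'
  have e : ∀ v : Equiv.Perm (Fin (M + 2)), (fun k => (v * Equiv.swap
      (⟨j, by omega⟩ : Fin (M + 2)) ⟨j + 1, hj⟩) k) = v ∘ Equiv.swap
      (⟨j, by omega⟩ : Fin (M + 2)) ⟨j + 1, hj⟩ := fun v => rfl
  rw [← mul_assoc, e, e]
  apply smul_right_injective _ ho
  simp only [smul_sub]
  rw [smul_comm, A, smul_comm _ (1 + β * σ _), smul_comm _ (1 + β * σ _), B, C]
  rw [smul_sub, h1', smul_comm, h2]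
  module

lemma swap_lt {M : ℕ} (ii : Fin (M + 1)) (a b : Fin (M + 2)) (hab : a < b)
    (h : ¬ (a = ii.castSucc ∧ b = ii.succ)) :
    Equiv.swap ii.castSucc ii.succ a < Equiv.swap ii.castSucc ii.succ b := by
  simp only [Equiv.swap_apply_def]
  simp only [Fin.ext_iff, Fin.lt_def, Fin.val_castSucc, Fin.val_succ] at *
  split_ifs <;> (try simp only [Fin.val_castSucc, Fin.val_succ]) <;> omega

lemma pos_of_len {M : ℕ} (ii : Fin (M + 1)) (π : Equiv.Perm (Fin (M + 2)))
    (hlen : permLength π < permLength (Equiv.swap ii.castSucc ii.succ * π)) :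
    π.symm ii.castSucc < π.symm ii.succ := by
  by_contra hcon
  apply hlen.not_ge
  unfold permLength
  apply Finset.card_le_card
  rw [Finset.subset_iff]
  intro p hp
  replace hp := (Finset.mem_filter.1 hp).2
  refine Finset.mem_filter.2 ⟨Finset.mem_univ _, ?_⟩
  rw [Equiv.Perm.mul_apply, Equiv.Perm.mul_apply] at hp
  refine ⟨hp.1, ?_⟩
  by_contra h
  have hne : π p.1 ≠ π p.2 := fun e => hp.1.ne (π.injective e)
  have hlt : π p.1 < π p.2 := lt_of_le_of_ne (not_lt.1 h) hne
  by_cases hc : π p.1 = ii.castSucc ∧ π p.2 = ii.succ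
  · apply hcon
    rw [← hc.1, ← hc.2]
    simpa using hp.1
  · exact (swap_lt ii _ _ hlt hc).not_gt hp.2

/-- Measure for the induction. -/
def meas {M : ℕ} (π : Equiv.Perm (Fin (M + 2))) : ℤ := ∑ k : Fin (M + 2), (M + 1 - (k : ℤ)) * (π k : ℤ)

lemma meas_nonneg {M : ℕ} (π : Equiv.Perm (Fin (M + 2))) : 0 ≤ meas π := by
  apply Finset.sum_nonneg
  intro k _
  have := k.isLt
  apply mul_nonneg <;> omega

lemma meas_swap {M : ℕ} (π : Equiv.Perm (Fin (M + 2))) (j : ℕ) (hj : j + 1 < M + 2)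
    (h : π ⟨j + 1, hj⟩ < π ⟨j, by omega⟩) :
    meas (π * Equiv.swap ⟨j, by omega⟩ ⟨j + 1, hj⟩) < meas π := by
  set J : Fin (M + 2) := ⟨j, by omega⟩ with hJ
  set J' : Fin (M + 2) := ⟨j + 1, hj⟩ with hJ'
  have hne : J ≠ J' := by simp [hJ, hJ']
  unfold meas
  rw [← sub_neg, ← Finset.sum_sub_distrib, ← Finset.sum_subset (Finset.subset_univ {J, J'}),
    Finset.sum_pair hne]
  · have : ((π J' : ℕ) : ℤ) < (π J : ℕ) := by exact_mod_cast h
    simp only [Equiv.Perm.mul_apply, Equiv.swap_apply_left, Equiv.swap_apply_right]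
    have e1 : ((J : ℕ) : ℤ) = j := by simp [hJ]
    have e2 : ((J' : ℕ) : ℤ) = j + 1 := by simp [hJ']
    rw [e1, e2]
    nlinarith
  · intro k _ hk
    simp only [Finset.mem_insert, Finset.mem_singleton, not_or] at hk
    simp [Equiv.swap_apply_of_ne_of_ne hk.1 hk.2]

lemma claim_all [Field F] (M : ℕ) (β : F) (σ : Fin (M + 2) → F) (ii : Fin (M + 1)) :
    ∀ (m : ℕ) (π : Equiv.Perm (Fin (M + 2))) (t : Fin (M + 2) → F), meas π < m →
    (∀ k, 1 + β * t k ≠ 0) → Function.Injective t →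
    π.symm ii.castSucc < π.symm ii.succ → Claim M β t σ ii π := by
  intro m
  induction m with
  | zero =>
    intro π t h
    have := meas_nonneg π
    push_cast at h
    omega
  | succ m ih =>
    intro π t hm ht hti hπ
    by_cases hd : ∃ (j : ℕ) (hj : j + 1 < M + 2), π ⟨j + 1, hj⟩ < π ⟨j, by omega⟩
    · obtain ⟨j, hj, hlt⟩ := hd
      have hms := meas_swap π j hj hlt
      obtain ⟨c, hc⟩ : ∃ c : Equiv.Perm (Fin (M + 2)),
        c = Equiv.swap ⟨j, by omega⟩ ⟨j + 1, hj⟩ := ⟨_, rfl⟩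
      have cc : c * c = 1 := by rw [hc]; exact Equiv.swap_mul_self _ _
      have c1 : c ⟨j, by omega⟩ = ⟨j + 1, hj⟩ := by rw [hc]; simp
      have c2 : c ⟨j + 1, hj⟩ = ⟨j, by omega⟩ := by rw [hc]; simp
      have hnot : ¬ (π ⟨j + 1, hj⟩ = ii.castSucc ∧ π ⟨j, by omega⟩ = ii.succ) := by
        rintro ⟨h1, h2⟩
        rw [← h1, ← h2] at hπ
        simp at hπ
      have hpos : (π * c).symm ii.castSucc < (π * c).symm ii.succ := by
        have e : ∀ x, (π * c).symm x = c (π.symm x) := by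
          intro x
          rw [Equiv.symm_apply_eq, Equiv.Perm.mul_apply, ← Equiv.Perm.mul_apply c c, cc]
          simp
        rw [e, e]
        have h3 : ¬ (π.symm ii.castSucc = ⟨j, by omega⟩ ∧ π.symm ii.succ = ⟨j + 1, hj⟩) := by
          rintro ⟨h1, h2⟩
          rw [Equiv.symm_apply_eq] at h1 h2
          rw [← h1, ← h2, Fin.lt_def] at hlt
          simp at hlt
        have := swap_lt (⟨j, by omega⟩ : Fin (M + 1)) _ _ hπ h3
        rw [hc]
        exact this
      have hm' : meas (π * c) < m := by
        rw [hc]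
        push_cast at hm
        omega
      have ht' : ∀ k, 1 + β * (t ∘ c) k ≠ 0 := fun k => ht _
      have hti' : Function.Injective (t ∘ c) := hti.comp c.injective
      have h1 := ih (π * c) (t ∘ c) hm' ht' hti' hpos
      have h2 := ih (π * c) t hm' ht hti hpos
      have tt : (t ∘ c) ∘ c = t := by
        funext k
        simp only [Function.comp_apply]
        rw [← Equiv.Perm.mul_apply, cc]; rfl
      have res := claim_step M β (t ∘ c) σ ii ht' hti' j hj (π * c)
        (by simpa [Equiv.Perm.mul_apply, c1, c2] using hlt)
        (by
          simp only [Equiv.Perm.mul_apply, c1, c2]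
          exact swap_lt ii _ _ hlt hnot) h1 (by rw [← hc, tt]; exact h2)
      rw [← hc, tt, mul_assoc, cc, mul_one] at res
      exact res
    · push Not at hd
      have hmono : StrictMono π := by
        rw [Fin.strictMono_iff_lt_succ]
        intro k
        refine lt_of_le_of_ne (hd k (by omega)) fun h => ?_
        have := π.injective h
        simp [Fin.ext_iff] at this
      have : π = 1 := by
        ext k
        have := (StrictMono.range_inj hmono strictMono_id).1 (by
          rw [π.surjective.range_eq]; simp)
        simp [this]
      subst this
      exact claim_one M β t σ ii ht

/-- **Lemma `l4`**: if `ℓ(s_i π) > ℓ(π)` then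
`⟨s_iπ| B_{N-1}(σ_1) ⋯ B_i(σ_{N-i}) B_{i-1}(σ_{N-i+1})
 = ∂^β_{N-i} (⟨π| B_{N-1}(σ_1) ⋯ B_i(σ_{N-i}) B_{i-1}(σ_{N-i+1}))`,
the β-divided difference acting componentwise in the variables `σ_{N-i}, σ_{N-i+1}`. -/
theorem bra_divided_difference [Field F] [CharZero F] (M : ℕ) (β : F)
    (σ t : Fin (M + 2) → F)
    (hind : AlgebraicIndependent ℚ
      (Sum.elim (fun _ : Unit => β) (Sum.elim σ t)))
    (ii : Fin (M + 1)) (π : Equiv.Perm (Fin (M + 2)))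
    (hlen : permLength π < permLength (Equiv.swap ii.castSucc ii.succ * π)) :
    ∀ s : Fin (M + 2) → Fin (M + 2),
      Matrix.vecMul (ket (M + 2) (M + 2) fun j => (Equiv.swap ii.castSucc ii.succ * π) j)
          (fullDesc M β t ii σ) s =
        ((1 + β * σ ⟨M + 1 - (ii : ℕ), by omega⟩) *
              Matrix.vecMul (ket (M + 2) (M + 2) fun j => π j) (fullDesc M β t ii σ) s -
            (1 + β * σ ⟨M - (ii : ℕ), by omega⟩) *
              Matrix.vecMul (ket (M + 2) (M + 2) fun j => π j)
                (fullDesc M β t ii fun j =>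
                  σ (Equiv.swap (⟨M - (ii : ℕ), by omega⟩ : Fin (M + 2))
                      ⟨M + 1 - (ii : ℕ), by omega⟩ j)) s) /
          (σ ⟨M - (ii : ℕ), by omega⟩ - σ ⟨M + 1 - (ii : ℕ), by omega⟩) := by
  have hinj := hind.injective
  have ht : ∀ k, 1 + β * t k ≠ 0 := by
    intro k h
    have h0 : (1 + MvPolynomial.X (Sum.inl ()) * MvPolynomial.X (Sum.inr (Sum.inr k)) :
        MvPolynomial (Unit ⊕ (Fin (M + 2) ⊕ Fin (M + 2))) ℚ) = 0 := by
      apply hind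
      simpa using h
    have := congrArg (MvPolynomial.eval fun _ => (0 : ℚ)) h0
    simp at this
  have hti : Function.Injective t := by
    intro a b h
    have := @hinj (Sum.inr (Sum.inr a)) (Sum.inr (Sum.inr b)) (by simpa using h)
    simpa using this
  have huv : σ ⟨M - (ii : ℕ), by omega⟩ - σ ⟨M + 1 - (ii : ℕ), by omega⟩ ≠ 0 := by
    intro h
    have := @hinj (Sum.inr (Sum.inl ⟨M - (ii : ℕ), by omega⟩))
      (Sum.inr (Sum.inl ⟨M + 1 - (ii : ℕ), by omega⟩)) (by simpa using sub_eq_zero.1 h)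
    simp at this
    omega
  have hC := claim_all M β σ ii ((meas π).toNat + 1) π t (by
    have := meas_nonneg π
    push_cast
    omega) ht hti (pos_of_len ii π hlen)
  intro s
  have hk : ∀ g : Fin (M + 2) → Fin (M + 2), ket (F := F) (M + 2) (M + 2) g = bv g := by
    intro g
    funext s
    simp [ket, Pi.single_apply]
  rw [hk, hk, eq_div_iff huv, mul_comm]
  have := congrFun hC s
  simpa using this
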